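/- Let (M,E,V) be a path geometry with V involutive, and let (∇,Π) be a distinguished Weyl structure with torsion τ and curvature R. Then, in addition to the general properties of Weyl structures, the components τ|_{V×ι(Q)} and R|_{Λ²H×V} vanish: τ(η,ζ) = 0 for all η ∈ Γ(V), ζ ∈ Γ(ι(Q)), and R(ψ₁,ψ₂)(η) = 0 whenever ψ₁,ψ₂ ∈ Γ(H), η ∈ Γ(V). -/

import Mathlib

/-!
Write `F η = ι(𝓛(ξ₀, η))`, a bijection from `V` onto `ι(Q)` that commutes with `∇` because
`ξ₀` and `ι ∘ 𝓛` are parallel.  Since `D(α₀) = 0`, brackets of `ξ₀` or of sections of `V` with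
sections of `ι(Q)`, and of `ξ₀` with sections of `V`, have no `E`-component.  Hence
`τ(ξ₀, η) = - F η`, and both `τ(ξ₀, ι w)` and `τ(η, ι w)` are sections of `V`.  The left hand
side of the normalization condition then vanishes because `V` is involutive, so
`τ(η, ι w) = 0` by injectivity of `F`.

The curvature statement follows from the first Bianchi identity, in the form
`∑ R(a,b)c = ∑ (∇_a (τ(b,c)) + τ(a,[b,c]))` (cyclic sums), which is applied to three kinds of
triples.
* `(ξ₀, η, η')`: the `Q`-component gives `τ(η, η') = 0`, and then `R(ξ₀, η)η'` is symmetric in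
  `η, η'`.
* `(η, η', F η'')`: the `Q`-component gives `R(η, η')η'' = 0`.
* `(ξ₀, η, F η')`: the `Q`-component gives `𝓛(ξ₀, R(ξ₀, η)η') = q(τ(F η', F η))`, which is skew
  in `η, η'`.  Together with the symmetry this forces `R(ξ₀, η)η' = 0`.
Tensoriality of `R` extends the vanishing to all of `H = E ⊕ V`.
-/

/-!
An algebraic model of the smooth calculus on a smooth manifold `M`:
`C` plays the role of the algebra `C^∞(M,ℝ)` of smooth functions and `X` plays the
role of the `C^∞(M,ℝ)`-module `𝔛(M)` of smooth vector fields, together with the Lie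
bracket of vector fields and the derivative of functions along vector fields
(i.e. a Lie–Rinehart algebra over `ℝ`).  Distributions (smooth subbundles of `TM`)
are modelled as `C`-submodules of `X`, linear connections on `TM` as operators
`X → X → X` with the usual tensoriality and Leibniz properties, and one-forms as
`C`-linear maps `X →ₗ[C] C`.
-/

open scoped TensorProduct

/-- The algebra of smooth functions together with the module of smooth vector
fields on a smooth manifold, with the Lie bracket and directional derivative. -/
structure VFCalc where
  /-- the smooth functions `C^∞(M,ℝ)` -/
  C : Type
  /-- the smooth vector fields `𝔛(M)` -/
  X : Type
  [ringC : CommRing C]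
  [algC : Algebra ℝ C]
  [grpX : AddCommGroup X]
  [modX : Module C X]
  /-- the Lie bracket of vector fields -/
  lie : X → X → X
  /-- the derivative `D ψ f = ψ · f` of a function along a vector field -/
  D : X → C → C
  lie_add_left : ∀ ψ₁ ψ₂ φ, lie (ψ₁ + ψ₂) φ = lie ψ₁ φ + lie ψ₂ φ
  lie_skew : ∀ ψ φ, lie φ ψ = - lie ψ φ
  jacobi : ∀ ψ₁ ψ₂ ψ₃, lie ψ₁ (lie ψ₂ ψ₃) = lie (lie ψ₁ ψ₂) ψ₃ + lie ψ₂ (lie ψ₁ ψ₃)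
  lie_smul_right : ∀ (f : C) (ψ φ : X), lie ψ (f • φ) = f • lie ψ φ + (D ψ f) • φ
  D_add_left : ∀ ψ₁ ψ₂ f, D (ψ₁ + ψ₂) f = D ψ₁ f + D ψ₂ f
  D_smul_left : ∀ (g : C) ψ f, D (g • ψ) f = g * D ψ f
  D_add_right : ∀ ψ f₁ f₂, D ψ (f₁ + f₂) = D ψ f₁ + D ψ f₂
  D_mul_right : ∀ ψ f₁ f₂, D ψ (f₁ * f₂) = f₁ * D ψ f₂ + f₂ * D ψ f₁
  D_algebraMap : ∀ ψ r, D ψ (algebraMap ℝ C r) = 0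

attribute [instance] VFCalc.ringC VFCalc.algC VFCalc.grpX VFCalc.modX

/-- the exterior derivative of a one-form, `dα(ψ,φ) = ψ·α(φ) − φ·α(ψ) − α([ψ,φ])` -/
def VFCalc.dform (P : VFCalc) (α : P.X →ₗ[P.C] P.C) (ψ φ : P.X) : P.C :=
  P.D ψ (α φ) - P.D φ (α ψ) - α (P.lie ψ φ)

/-- A (generalized) path geometry on a manifold `M` of dimension `2n+1`:
distributions `E, V ⊂ TM` (of rank `1` and `n`) with `E ∩ V = 0`, `V` involutive,
such that the Levi bracket induces an isomorphism `E ⊗ V ≅ Q := TM/(E ⊕ V)`. -/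
structure PathGeometry extends VFCalc where
  /-- the rank one distribution `E` -/
  E : Submodule C X
  /-- the rank `n` distribution `V` -/
  V : Submodule C X
  inf_bot : E ⊓ V = ⊥
  involutive : ∀ η₁ ∈ V, ∀ η₂ ∈ V, lie η₁ η₂ ∈ V
  /-- the Levi bracket `E ⊗ V → Q = TM/(E ⊔ V)` is an isomorphism of bundles -/
  leviIso : (↥E ⊗[C] ↥V) ≃ₗ[C] (X ⧸ (E ⊔ V))
  leviIso_apply : ∀ (ξ : ↥E) (η : ↥V),
    leviIso (ξ ⊗ₜ[C] η) = Submodule.Quotient.mk (lie (ξ : X) (η : X))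

namespace PathGeometry

variable (P : PathGeometry)

/-- the corank one distribution `H = E ⊕ V` -/
def H : Submodule P.C P.X := P.E ⊔ P.V

/-- the quotient bundle `Q = TM/H` -/
abbrev Q := P.X ⧸ P.H

/-- the quotient projection `q : TM → Q` -/
def q : P.X →ₗ[P.C] P.Q := P.H.mkQ

/-- the Levi bracket `𝓛(ψ,φ) = q([ψ,φ])` -/
def levi (ψ φ : P.X) : P.Q := P.q (P.lie ψ φ)

/-- the constant function `½` -/
noncomputable def half : P.C := algebraMap ℝ P.C (1/2)

/-- A (local) scale: a nowhere vanishing smooth section `ξ₀` of the line bundle `E`,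
i.e. a trivialization of `E`, modelled as a basis of `E` as free rank one module. -/
structure IsScale (ξ₀ : P.X) : Prop where
  mem : ξ₀ ∈ P.E
  span : ∀ ξ ∈ P.E, ∃ f : P.C, ξ = f • ξ₀
  basis : ∀ f : P.C, f • ξ₀ = 0 → f = 0

end PathGeometry

/-- A linear connection on `TM`. -/
structure Conn (P : VFCalc) where
  /-- the covariant derivative `cov ψ φ = ∇_ψ φ` -/
  cov : P.X → P.X → P.X
  add_left : ∀ ψ₁ ψ₂ φ, cov (ψ₁ + ψ₂) φ = cov ψ₁ φ + cov ψ₂ φ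
  smul_left : ∀ (f : P.C) ψ φ, cov (f • ψ) φ = f • cov ψ φ
  add_right : ∀ ψ φ₁ φ₂, cov ψ (φ₁ + φ₂) = cov ψ φ₁ + cov ψ φ₂
  leibniz : ∀ (f : P.C) ψ φ, cov ψ (f • φ) = f • cov ψ φ + (P.D ψ f) • φ

namespace Conn

variable {P : VFCalc} (cn : Conn P)

/-- the torsion `τ(ψ₁,ψ₂) = ∇_{ψ₁}ψ₂ − ∇_{ψ₂}ψ₁ − [ψ₁,ψ₂]` -/
def torsion (ψ₁ ψ₂ : P.X) : P.X := cn.cov ψ₁ ψ₂ - cn.cov ψ₂ ψ₁ - P.lie ψ₁ ψ₂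

/-- the curvature `R(ψ₁,ψ₂)(ψ₃) = ∇_{ψ₁}∇_{ψ₂}ψ₃ − ∇_{ψ₂}∇_{ψ₁}ψ₃ − ∇_{[ψ₁,ψ₂]}ψ₃` -/
def curv (ψ₁ ψ₂ ψ₃ : P.X) : P.X :=
  cn.cov ψ₁ (cn.cov ψ₂ ψ₃) - cn.cov ψ₂ (cn.cov ψ₁ ψ₃) - cn.cov (P.lie ψ₁ ψ₂) ψ₃

end Conn

/-- The Weyl structure associated to a scale `ξ₀`: a linear connection `∇` on `TM`
together with a decomposition `TM = E ⊕ V ⊕ ι(Q)` (encoded by the splitting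
`ι : Q → TM` of `q`) such that `E`, `V`, `ι(Q)` are parallel, `∇ξ₀ = 0`,
`ι ∘ 𝓛 : E ⊗ V → ι(Q)` is parallel, the torsion satisfies `τ(E,V) ⊂ ι(Q)`,
`τ(H,ι(Q)) ⊂ H` and the normalization
`𝓛(τ(ξ₀,ζ₁),η₂) = 2𝓛(ξ₀,τ(η₁,ζ₂))` for `ζᵢ = ι(𝓛(ξ₀,ηᵢ))`. -/
structure WeylStructure (P : PathGeometry) (ξ₀ : P.X) where
  conn : Conn P.toVFCalc
  ι : P.Q →ₗ[P.C] P.X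
  q_ι : ∀ w, P.q (ι w) = w
  parE : ∀ ψ : P.X, ∀ ξ ∈ P.E, conn.cov ψ ξ ∈ P.E
  parV : ∀ ψ : P.X, ∀ η ∈ P.V, conn.cov ψ η ∈ P.V
  parQ : ∀ (ψ : P.X) (w : P.Q), conn.cov ψ (ι w) ∈ LinearMap.range ι
  parScale : ∀ ψ : P.X, conn.cov ψ ξ₀ = 0
  parLevi : ∀ ψ : P.X, ∀ ξ ∈ P.E, ∀ η ∈ P.V,
    conn.cov ψ (ι (P.levi ξ η)) = ι (P.levi (conn.cov ψ ξ) η) + ι (P.levi ξ (conn.cov ψ η))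
  torsEV : ∀ ξ ∈ P.E, ∀ η ∈ P.V, conn.torsion ξ η ∈ LinearMap.range ι
  torsHQ : ∀ ψ ∈ P.H, ∀ w : P.Q, conn.torsion ψ (ι w) ∈ P.H
  norm : ∀ η₁ ∈ P.V, ∀ η₂ ∈ P.V,
    P.levi (conn.torsion ξ₀ (ι (P.levi ξ₀ η₁))) η₂
      = (2 : P.C) • P.levi ξ₀ (conn.torsion η₁ (ι (P.levi ξ₀ η₂)))

/-! ### Formal rules for brackets, connections, torsion and curvature -/

/-- Modules over the smooth functions have no `2`-torsion, since `½` is a smooth function. -/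
theorem VFCalc.eq_zero_of_add_self (P : VFCalc) {N : Type*} [AddCommGroup N] [Module P.C N]
    {x : N} (h : x + x = 0) : x = 0 := by
  have h2 : algebraMap ℝ P.C (1/2) * 2 = 1 := by
    have : (2 : P.C) = algebraMap ℝ P.C 2 := (map_ofNat _ 2).symm
    rw [this, ← map_mul]; norm_num
  calc x = (1 : P.C) • x := (one_smul _ _).symm
    _ = algebraMap ℝ P.C (1/2) • (x + x) := by rw [← h2, mul_smul, two_smul]
    _ = 0 := by rw [h, smul_zero]

theorem VFCalc.lie_add_right (P : VFCalc) (a b c : P.X) :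
    P.lie a (b + c) = P.lie a b + P.lie a c := by
  rw [P.lie_skew (b + c) a, P.lie_skew b a, P.lie_skew c a, P.lie_add_left]; abel

theorem VFCalc.lie_zero_left (P : VFCalc) (a : P.X) : P.lie 0 a = 0 := by
  have := P.lie_add_left 0 0 a
  simpa using this

theorem VFCalc.lie_self (P : VFCalc) (a : P.X) : P.lie a a = 0 := by
  apply P.eq_zero_of_add_self
  nth_rewrite 1 [P.lie_skew a a]
  abel

theorem VFCalc.lie_smul_left (P : VFCalc) (f : P.C) (a b : P.X) :
    P.lie (f • a) b = f • P.lie a b - P.D b f • a := by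
  rw [P.lie_skew b (f • a), P.lie_smul_right, P.lie_skew a b, smul_neg]; abel

theorem VFCalc.D_one (P : VFCalc) (a : P.X) : P.D a 1 = 0 := by
  simpa using P.D_algebraMap a 1

theorem VFCalc.D_zero (P : VFCalc) (a : P.X) : P.D a 0 = 0 := by
  simpa using P.D_algebraMap a 0

namespace Conn

variable {P : VFCalc} (cn : Conn P)

theorem zero_left (a : P.X) : cn.cov 0 a = 0 := by
  simpa using cn.add_left 0 0 a

theorem zero_right (a : P.X) : cn.cov a 0 = 0 := by
  simpa using cn.add_right a 0 0

theorem neg_right (a b : P.X) : cn.cov a (-b) = - cn.cov a b := by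
  rw [eq_neg_iff_add_eq_zero, ← cn.add_right, neg_add_cancel, cn.zero_right]

theorem neg_left (a b : P.X) : cn.cov (-a) b = - cn.cov a b := by
  rw [eq_neg_iff_add_eq_zero, ← cn.add_left, neg_add_cancel, cn.zero_left]

theorem sub_left (a b c : P.X) : cn.cov (a - b) c = cn.cov a c - cn.cov b c := by
  rw [sub_eq_add_neg, cn.add_left, cn.neg_left, sub_eq_add_neg]

theorem sub_right (a b c : P.X) : cn.cov a (b - c) = cn.cov a b - cn.cov a c := by
  rw [sub_eq_add_neg, cn.add_right, cn.neg_right, sub_eq_add_neg]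

theorem torsion_skew (a b : P.X) : cn.torsion b a = - cn.torsion a b := by
  unfold torsion; rw [P.lie_skew a b]; abel

theorem torsion_add (a b c : P.X) :
    cn.torsion a (b + c) = cn.torsion a b + cn.torsion a c := by
  unfold torsion; rw [P.lie_add_right, cn.add_left, cn.add_right]; abel

theorem torsion_zero (a : P.X) : cn.torsion a 0 = 0 := by
  simpa using cn.torsion_add a 0 0

theorem torsion_neg (a b : P.X) : cn.torsion a (-b) = - cn.torsion a b := by
  rw [eq_neg_iff_add_eq_zero, ← cn.torsion_add, neg_add_cancel, cn.torsion_zero]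

theorem torsion_sub (a b c : P.X) :
    cn.torsion a (b - c) = cn.torsion a b - cn.torsion a c := by
  rw [sub_eq_add_neg, cn.torsion_add, cn.torsion_neg, sub_eq_add_neg]

theorem lie_eq (a b : P.X) : P.lie a b = cn.cov a b - cn.cov b a - cn.torsion a b := by
  unfold torsion; abel

theorem curv_skew (a b c : P.X) : cn.curv b a c = - cn.curv a b c := by
  unfold curv; rw [P.lie_skew a b, cn.neg_left]; abel

theorem curv_self (a c : P.X) : cn.curv a a c = 0 := by
  unfold curv; rw [P.lie_self, cn.zero_left]; abel

theorem curv_add_left (a b c d : P.X) :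
    cn.curv (a + b) c d = cn.curv a c d + cn.curv b c d := by
  unfold curv; rw [P.lie_add_left]; simp only [cn.add_left, cn.add_right]; abel

theorem curv_smul_left (f : P.C) (a b c : P.X) :
    cn.curv (f • a) b c = f • cn.curv a b c := by
  unfold curv
  rw [P.lie_smul_left, cn.sub_left]
  simp only [cn.smul_left, cn.leibniz, smul_sub]; abel

/-- The first Bianchi identity, with the derivative of the torsion written out in terms of
Lie brackets. -/
theorem bianchi (a b c : P.X) :
    cn.curv a b c + cn.curv b c a + cn.curv c a b =
      cn.cov a (cn.torsion b c) + cn.cov b (cn.torsion c a) + cn.cov c (cn.torsion a b)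
        + cn.torsion a (P.lie b c) + cn.torsion b (P.lie c a) + cn.torsion c (P.lie a b) := by
  have hJ := P.jacobi a b c
  rw [P.lie_skew c (P.lie a b), P.lie_skew c a] at hJ
  have hz : P.lie b (-P.lie c a) = - P.lie b (P.lie c a) := by
    rw [eq_neg_iff_add_eq_zero, ← P.lie_add_right, neg_add_cancel, P.lie_skew 0 b,
      P.lie_zero_left, neg_zero]
  rw [hz] at hJ
  simp only [torsion, curv, cn.sub_right]
  rw [hJ]
  abel

end Conn

/-! ### The scale and the Levi bracket -/

namespace PathGeometry

variable (P : PathGeometry)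

theorem q_eq_zero {ψ : P.X} (h : ψ ∈ P.H) : P.q ψ = 0 :=
  (Submodule.Quotient.mk_eq_zero P.H).2 h

theorem mem_H_of_V {η : P.X} (h : η ∈ P.V) : η ∈ P.H := Submodule.mem_sup_right h

theorem mem_H_of_E {ξ : P.X} (h : ξ ∈ P.E) : ξ ∈ P.H := Submodule.mem_sup_left h

theorem levi_add_right (a b c : P.X) : P.levi a (b + c) = P.levi a b + P.levi a c := by
  unfold levi; rw [P.lie_add_right, map_add]

theorem levi_V {a b : P.X} (ha : a ∈ P.V) (hb : b ∈ P.V) : P.levi a b = 0 :=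
  P.q_eq_zero (P.mem_H_of_V (P.involutive a ha b hb))

variable {P} {ξ₀ : P.X}

/-- The scale trivializes `E`, so `η ↦ 𝓛(ξ₀, η)` inherits injectivity from the Levi
isomorphism on `E ⊗ V ≅ V`. -/
theorem levi_inj (hξ₀ : P.IsScale ξ₀) {η : P.X} (hη : η ∈ P.V) (h : P.levi ξ₀ η = 0) : η = 0 := by
  have h1 : P.leviIso ((⟨ξ₀, hξ₀.mem⟩ : P.E) ⊗ₜ[P.C] (⟨η, hη⟩ : P.V)) = 0 := by
    rw [P.leviIso_apply]; exact h
  have h2 := (LinearEquiv.map_eq_zero_iff _).1 h1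
  let e : P.C ≃ₗ[P.C] P.E := LinearEquiv.ofBijective
    (LinearMap.toSpanSingleton P.C P.E ⟨ξ₀, hξ₀.mem⟩) ⟨by
      rw [injective_iff_map_eq_zero]
      intro f hf
      apply hξ₀.basis f
      simpa [Subtype.ext_iff] using hf, by
      rintro ⟨ξ, hξ⟩
      obtain ⟨f, hf⟩ := hξ₀.span ξ hξ
      exact ⟨f, by simp [hf]⟩⟩
  have he : e.symm ⟨ξ₀, hξ₀.mem⟩ = 1 := by
    rw [LinearEquiv.symm_apply_eq]
    exact (LinearMap.toSpanSingleton_apply_one P.C P.E _).symm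
  have h3 := congrArg (fun t => TensorProduct.lid P.C P.V
    (TensorProduct.congr e.symm (LinearEquiv.refl P.C P.V) t)) h2
  simp only [TensorProduct.congr_tmul, he, map_zero, TensorProduct.lid_tmul, one_smul,
    LinearEquiv.refl_apply] at h3
  exact congrArg Subtype.val h3

/-- The scale trivializes `E`, so every element of `E ⊗ V` is of the form `ξ₀ ⊗ η`. -/
theorem levi_surj (hξ₀ : P.IsScale ξ₀) (w : P.Q) : ∃ η ∈ P.V, w = P.levi ξ₀ η := by
  obtain ⟨t, ht⟩ := P.leviIso.surjective w
  have key : ∀ t : P.E ⊗[P.C] P.V, ∃ η : P.V,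
      t = (⟨ξ₀, hξ₀.mem⟩ : P.E) ⊗ₜ[P.C] η := by
    intro t
    induction t using TensorProduct.induction_on with
    | zero => exact ⟨0, by rw [TensorProduct.tmul_zero]⟩
    | tmul ξ η =>
      obtain ⟨f, hf⟩ := hξ₀.span ξ ξ.2
      refine ⟨f • η, ?_⟩
      rw [← TensorProduct.smul_tmul]
      congr 1
      exact Subtype.ext hf
    | add x y hx hy =>
      obtain ⟨a, rfl⟩ := hx
      obtain ⟨b, rfl⟩ := hy
      exact ⟨a + b, by rw [TensorProduct.tmul_add]⟩
  obtain ⟨η, rfl⟩ := key t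
  refine ⟨η, η.2, ?_⟩
  rw [← ht, P.leviIso_apply]
  rfl

/-- The intersection `E ∩ V` being zero, a multiple of the scale in `V` is zero. -/
theorem coeff_eq_zero (hξ₀ : P.IsScale ξ₀) {f : P.C} (h : f • ξ₀ ∈ P.V) : f = 0 := by
  apply hξ₀.basis
  have : f • ξ₀ ∈ P.E ⊓ P.V := ⟨P.E.smul_mem f hξ₀.mem, h⟩
  rwa [P.inf_bot, Submodule.mem_bot] at this

theorem mem_H_iff (hξ₀ : P.IsScale ξ₀) {ψ : P.X} (h : ψ ∈ P.H) : ∃ f : P.C, ∃ η ∈ P.V, ψ = f • ξ₀ + η := by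
  obtain ⟨ξ, hξ, η, hη, rfl⟩ := Submodule.mem_sup.1 h
  obtain ⟨f, rfl⟩ := hξ₀.span ξ hξ
  exact ⟨f, η, hη, rfl⟩

end PathGeometry

/-! ### Torsion and curvature of a distinguished Weyl structure -/

namespace WeylStructure

variable {P : PathGeometry} {ξ₀ : P.X}

/-- The isomorphism `V → ι(Q)`, `η ↦ ι(𝓛(ξ₀, η))`, given by a scale; only its underlying map,
extended to all vector fields. -/
def F (W : WeylStructure P ξ₀) (η : P.X) : P.X := W.ι (P.levi ξ₀ η)

variable (W : WeylStructure P ξ₀)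

theorem F_add (a b : P.X) : W.F (a + b) = W.F a + W.F b := by
  unfold F; rw [P.levi_add_right, map_add]

theorem q_F (η : P.X) : P.q (W.F η) = P.levi ξ₀ η := W.q_ι _

theorem cov_F (hξ₀ : P.IsScale ξ₀) (ψ : P.X) {η : P.X} (hη : η ∈ P.V) :
    W.conn.cov ψ (W.F η) = W.F (W.conn.cov ψ η) := by
  have h0 : P.levi 0 η = 0 := by unfold PathGeometry.levi; rw [P.lie_zero_left, map_zero]
  unfold F
  rw [W.parLevi ψ ξ₀ hξ₀.mem η hη, W.parScale, h0, map_zero, zero_add]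

theorem F_sub (a b : P.X) : W.F (a - b) = W.F a - W.F b := by
  rw [eq_sub_iff_add_eq, ← F_add, sub_add_cancel]

theorem curv_F (hξ₀ : P.IsScale ξ₀) (a b : P.X) {η : P.X} (hη : η ∈ P.V) :
    W.conn.curv a b (W.F η) = W.F (W.conn.curv a b η) := by
  unfold Conn.curv
  rw [F_sub, F_sub, W.cov_F hξ₀ b hη, W.cov_F hξ₀ a hη, W.cov_F hξ₀ _ hη,
    W.cov_F hξ₀ a (W.parV b η hη), W.cov_F hξ₀ b (W.parV a η hη)]

theorem curv_V (a b : P.X) {η : P.X} (hη : η ∈ P.V) : W.conn.curv a b η ∈ P.V :=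
  P.V.sub_mem (P.V.sub_mem (W.parV _ _ (W.parV _ _ hη)) (W.parV _ _ (W.parV _ _ hη)))
    (W.parV _ _ hη)

theorem curv_scale (a b : P.X) : W.conn.curv a b ξ₀ = 0 := by
  unfold Conn.curv; simp only [W.parScale, W.conn.zero_right, sub_zero]

theorem tors_VV {a b : P.X} (ha : a ∈ P.V) (hb : b ∈ P.V) : W.conn.torsion a b ∈ P.V :=
  P.V.sub_mem (P.V.sub_mem (W.parV _ _ hb) (W.parV _ _ ha)) (P.involutive a ha b hb)

variable {α : P.X →ₗ[P.C] P.C}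

theorem α_V (hξ₀ : P.IsScale ξ₀)
    (hα : ∀ ψ : P.X, ψ - α ψ • ξ₀ - W.ι (P.q ψ) ∈ P.V) {η : P.X} (hη : η ∈ P.V) : α η = 0 := by
  apply PathGeometry.coeff_eq_zero hξ₀
  have h := hα η
  rw [P.q_eq_zero (P.mem_H_of_V hη), map_zero, sub_zero] at h
  simpa using P.V.sub_mem hη h

theorem α_scale (hξ₀ : P.IsScale ξ₀)
    (hα : ∀ ψ : P.X, ψ - α ψ • ξ₀ - W.ι (P.q ψ) ∈ P.V) : α ξ₀ = 1 := by
  have h := hα ξ₀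
  rw [P.q_eq_zero (P.mem_H_of_E hξ₀.mem), map_zero, sub_zero] at h
  have h2 : (1 - α ξ₀) • ξ₀ ∈ P.V := by rwa [sub_smul, one_smul]
  exact (sub_eq_zero.1 (PathGeometry.coeff_eq_zero hξ₀ h2)).symm

theorem α_ι (hξ₀ : P.IsScale ξ₀)
    (hα : ∀ ψ : P.X, ψ - α ψ • ξ₀ - W.ι (P.q ψ) ∈ P.V) (w : P.Q) : α (W.ι w) = 0 := by
  apply PathGeometry.coeff_eq_zero hξ₀
  have h := hα (W.ι w)
  rw [W.q_ι] at h
  simpa using h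

theorem mem_V (hα : ∀ ψ : P.X, ψ - α ψ • ξ₀ - W.ι (P.q ψ) ∈ P.V) {ψ : P.X} (h : ψ ∈ P.H) (h' : α ψ = 0) : ψ ∈ P.V := by
  have := hα ψ
  rwa [P.q_eq_zero h, map_zero, sub_zero, h', zero_smul, sub_zero] at this

/-- Consequence of `D(α₀) = 0`: as `α ξ₀` is constant, `[ξ₀, φ]` stays in the kernel of `α`. -/
theorem α_lie_scale (hξ₀ : P.IsScale ξ₀)
    (hα : ∀ ψ : P.X, ψ - α ψ • ξ₀ - W.ι (P.q ψ) ∈ P.V)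
    (hdist : ∀ ψ ∈ P.H, ∀ φ : P.X, P.dform α ψ φ = 0)
    {φ : P.X} (h : α φ = 0) : α (P.lie ξ₀ φ) = 0 := by
  have := hdist ξ₀ (P.mem_H_of_E hξ₀.mem) φ
  unfold VFCalc.dform at this
  rw [h, W.α_scale hξ₀ hα, P.D_zero, P.D_one] at this
  simpa using this

theorem α_lie_V (hξ₀ : P.IsScale ξ₀)
    (hα : ∀ ψ : P.X, ψ - α ψ • ξ₀ - W.ι (P.q ψ) ∈ P.V)
    (hdist : ∀ ψ ∈ P.H, ∀ φ : P.X, P.dform α ψ φ = 0)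
    {η φ : P.X} (hη : η ∈ P.V) (h : α φ = 0) : α (P.lie η φ) = 0 := by
  have := hdist η (P.mem_H_of_V hη) φ
  unfold VFCalc.dform at this
  rw [h, W.α_V hξ₀ hα hη, P.D_zero, P.D_zero] at this
  simpa using this

theorem tors_scale_V (hξ₀ : P.IsScale ξ₀) {η : P.X} (hη : η ∈ P.V) : W.conn.torsion ξ₀ η = - W.F η := by
  obtain ⟨w, hw⟩ := W.torsEV ξ₀ hξ₀.mem η hη
  have h : P.q (W.conn.torsion ξ₀ η) = - P.levi ξ₀ η := by
    unfold Conn.torsion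
    rw [W.parScale, sub_zero, map_sub, P.q_eq_zero (P.mem_H_of_V (W.parV _ _ hη)), zero_sub]
    rfl
  rw [← hw, W.q_ι] at h
  rw [← hw, h, map_neg]; rfl

theorem tors_scale_ι (hξ₀ : P.IsScale ξ₀)
    (hα : ∀ ψ : P.X, ψ - α ψ • ξ₀ - W.ι (P.q ψ) ∈ P.V)
    (hdist : ∀ ψ ∈ P.H, ∀ φ : P.X, P.dform α ψ φ = 0)
    (w : P.Q) : W.conn.torsion ξ₀ (W.ι w) ∈ P.V := by
  apply W.mem_V hα (W.torsHQ _ (P.mem_H_of_E hξ₀.mem) w)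
  obtain ⟨w', hw'⟩ := W.parQ ξ₀ w
  unfold Conn.torsion
  rw [W.parScale, sub_zero, map_sub, ← hw', W.α_ι hξ₀ hα,
    W.α_lie_scale hξ₀ hα hdist (W.α_ι hξ₀ hα w), sub_zero]

theorem tors_V_ι_mem (hξ₀ : P.IsScale ξ₀)
    (hα : ∀ ψ : P.X, ψ - α ψ • ξ₀ - W.ι (P.q ψ) ∈ P.V)
    (hdist : ∀ ψ ∈ P.H, ∀ φ : P.X, P.dform α ψ φ = 0)
    {η : P.X} (hη : η ∈ P.V) (w : P.Q) :
    W.conn.torsion η (W.ι w) ∈ P.V := by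
  apply W.mem_V hα (W.torsHQ _ (P.mem_H_of_V hη) w)
  obtain ⟨w', hw'⟩ := W.parQ η w
  unfold Conn.torsion
  rw [map_sub, map_sub, ← hw', W.α_ι hξ₀ hα, W.α_V hξ₀ hα (W.parV _ _ hη),
    W.α_lie_V hξ₀ hα hdist hη (W.α_ι hξ₀ hα w), sub_zero, sub_zero]

/-- The vanishing of `τ|_{V×ι(Q)}`: the left hand side of the normalization condition is a Levi
bracket of two sections of the involutive `V`. -/
theorem tors_V_ι (hξ₀ : P.IsScale ξ₀)
    (hα : ∀ ψ : P.X, ψ - α ψ • ξ₀ - W.ι (P.q ψ) ∈ P.V)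
    (hdist : ∀ ψ ∈ P.H, ∀ φ : P.X, P.dform α ψ φ = 0)
    {η : P.X} (hη : η ∈ P.V) (w : P.Q) : W.conn.torsion η (W.ι w) = 0 := by
  obtain ⟨η₂, hη₂, rfl⟩ := PathGeometry.levi_surj hξ₀ w
  apply PathGeometry.levi_inj hξ₀ (W.tors_V_ι_mem hξ₀ hα hdist hη _)
  have h := W.norm η hη η₂ hη₂
  rw [P.levi_V (W.tors_scale_ι hξ₀ hα hdist _) hη₂, two_smul] at h
  exact P.eq_zero_of_add_self h.symm

/-- Terms lying in `V` do not contribute to the `Q`-component. -/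
theorem q_V {η : P.X} (hη : η ∈ P.V) : P.q η = 0 := P.q_eq_zero (P.mem_H_of_V hη)

/-- `[ξ₀, η] = ∇_{ξ₀} η + F η`. -/
theorem lie_scale_V (hξ₀ : P.IsScale ξ₀) {η : P.X} (hη : η ∈ P.V) :
    P.lie ξ₀ η = W.conn.cov ξ₀ η + W.F η := by
  rw [W.conn.lie_eq, W.parScale, W.tors_scale_V hξ₀ hη]; abel

theorem lie_V_scale (hξ₀ : P.IsScale ξ₀) {η : P.X} (hη : η ∈ P.V) :
    P.lie η ξ₀ = - W.conn.cov ξ₀ η - W.F η := by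
  rw [P.lie_skew ξ₀, W.lie_scale_V hξ₀ hη]; abel

theorem tors_V_F (hξ₀ : P.IsScale ξ₀)
    (hα : ∀ ψ : P.X, ψ - α ψ • ξ₀ - W.ι (P.q ψ) ∈ P.V)
    (hdist : ∀ ψ ∈ P.H, ∀ φ : P.X, P.dform α ψ φ = 0)
    {η : P.X} (hη : η ∈ P.V) (η' : P.X) : W.conn.torsion η (W.F η') = 0 :=
  W.tors_V_ι hξ₀ hα hdist hη _

theorem tors_F_V (hξ₀ : P.IsScale ξ₀)
    (hα : ∀ ψ : P.X, ψ - α ψ • ξ₀ - W.ι (P.q ψ) ∈ P.V)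
    (hdist : ∀ ψ ∈ P.H, ∀ φ : P.X, P.dform α ψ φ = 0)
    {η : P.X} (hη : η ∈ P.V) (η' : P.X) : W.conn.torsion (W.F η') η = 0 := by
  rw [W.conn.torsion_skew η, W.tors_V_F hξ₀ hα hdist hη, neg_zero]

/-- The Bianchi identity for `ξ₀`, `η`, `η'`. -/
theorem bianchi_VV (hξ₀ : P.IsScale ξ₀)
    (hα : ∀ ψ : P.X, ψ - α ψ • ξ₀ - W.ι (P.q ψ) ∈ P.V)
    (hdist : ∀ ψ ∈ P.H, ∀ φ : P.X, P.dform α ψ φ = 0)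
    {a b : P.X} (ha : a ∈ P.V) (hb : b ∈ P.V) :
    W.conn.curv ξ₀ a b - W.conn.curv ξ₀ b a =
      W.conn.cov ξ₀ (W.conn.torsion a b) - W.conn.torsion a (W.conn.cov ξ₀ b)
        + W.conn.torsion b (W.conn.cov ξ₀ a) + W.F (W.conn.torsion a b) := by
  have h := W.conn.bianchi ξ₀ a b
  rw [W.curv_scale, W.conn.curv_skew ξ₀ b, W.conn.torsion_skew ξ₀ b, W.tors_scale_V hξ₀ ha,
    W.tors_scale_V hξ₀ hb, W.tors_scale_V hξ₀ (P.involutive a ha b hb), neg_neg,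
    W.lie_scale_V hξ₀ ha, W.lie_V_scale hξ₀ hb, W.conn.torsion_add, W.conn.torsion_sub,
    W.conn.torsion_neg, W.tors_V_F hξ₀ hα hdist ha, W.tors_V_F hξ₀ hα hdist hb,
    W.conn.neg_right, W.cov_F hξ₀ _ ha, W.cov_F hξ₀ _ hb] at h
  have hF : W.F (W.conn.torsion a b) =
      W.F (W.conn.cov a b) - W.F (W.conn.cov b a) - W.F (P.lie a b) := by
    rw [← F_sub, ← F_sub]; rfl
  rw [hF]
  have h' : W.conn.curv ξ₀ a b - W.conn.curv ξ₀ b a =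
      W.conn.curv ξ₀ a b + 0 + -W.conn.curv ξ₀ b a := by abel
  rw [h', h]
  abel

/-- In the Bianchi identity for `ξ₀`, `a`, `b` every term other than `F (τ(a, b))` lies in `V`. -/
theorem tors_VV_zero (hξ₀ : P.IsScale ξ₀)
    (hα : ∀ ψ : P.X, ψ - α ψ • ξ₀ - W.ι (P.q ψ) ∈ P.V)
    (hdist : ∀ ψ ∈ P.H, ∀ φ : P.X, P.dform α ψ φ = 0)
    {a b : P.X} (ha : a ∈ P.V) (hb : b ∈ P.V) :
    W.conn.torsion a b = 0 := by
  apply PathGeometry.levi_inj hξ₀ (W.tors_VV ha hb)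
  have h := congrArg P.q (W.bianchi_VV hξ₀ hα hdist ha hb)
  simpa only [map_add, map_sub, q_V (W.curv_V _ _ ha), q_V (W.curv_V _ _ hb),
    q_V (W.parV _ _ (W.tors_VV ha hb)), q_V (W.tors_VV ha (W.parV ξ₀ _ hb)),
    q_V (W.tors_VV hb (W.parV ξ₀ _ ha)), W.q_F, sub_zero, add_zero, zero_add, eq_comm] using h

theorem curv_symm (hξ₀ : P.IsScale ξ₀)
    (hα : ∀ ψ : P.X, ψ - α ψ • ξ₀ - W.ι (P.q ψ) ∈ P.V)
    (hdist : ∀ ψ ∈ P.H, ∀ φ : P.X, P.dform α ψ φ = 0)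
    {a b : P.X} (ha : a ∈ P.V) (hb : b ∈ P.V) :
    W.conn.curv ξ₀ a b = W.conn.curv ξ₀ b a := by
  rw [← sub_eq_zero, W.bianchi_VV hξ₀ hα hdist ha hb, W.tors_VV_zero hξ₀ hα hdist ha hb,
    W.tors_VV_zero hξ₀ hα hdist ha (W.parV ξ₀ _ hb),
    W.tors_VV_zero hξ₀ hα hdist hb (W.parV ξ₀ _ ha), W.conn.zero_right]
  have : W.F 0 = 0 := by simpa using W.F_sub 0 0
  rw [this]; abel

theorem lie_V_F (hξ₀ : P.IsScale ξ₀)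
    (hα : ∀ ψ : P.X, ψ - α ψ • ξ₀ - W.ι (P.q ψ) ∈ P.V)
    (hdist : ∀ ψ ∈ P.H, ∀ φ : P.X, P.dform α ψ φ = 0)
    {a : P.X} (ha : a ∈ P.V) {c : P.X} (hc : c ∈ P.V) :
    P.lie a (W.F c) = W.F (W.conn.cov a c) - W.conn.cov (W.F c) a := by
  rw [W.conn.lie_eq, W.tors_V_F hξ₀ hα hdist ha, W.cov_F hξ₀ _ hc, sub_zero]

theorem curv_VVV (hξ₀ : P.IsScale ξ₀)
    (hα : ∀ ψ : P.X, ψ - α ψ • ξ₀ - W.ι (P.q ψ) ∈ P.V)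
    (hdist : ∀ ψ ∈ P.H, ∀ φ : P.X, P.dform α ψ φ = 0)
    {a b c : P.X} (ha : a ∈ P.V) (hb : b ∈ P.V) (hc : c ∈ P.V) :
    W.conn.curv a b c = 0 := by
  apply PathGeometry.levi_inj hξ₀ (W.curv_V _ _ hc)
  have h := W.conn.bianchi a b (W.F c)
  rw [P.lie_skew a (W.F c), W.lie_V_F hξ₀ hα hdist ha hc, W.lie_V_F hξ₀ hα hdist hb hc,
    W.tors_V_F hξ₀ hα hdist hb, W.tors_F_V hξ₀ hα hdist ha,
    W.tors_VV_zero hξ₀ hα hdist ha hb, W.conn.torsion_neg, W.conn.torsion_sub,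
    W.conn.torsion_sub, W.tors_V_F hξ₀ hα hdist ha, W.tors_V_F hξ₀ hα hdist hb,
    W.tors_VV_zero hξ₀ hα hdist ha (W.parV _ _ hb),
    W.tors_VV_zero hξ₀ hα hdist hb (W.parV _ _ ha),
    W.tors_F_V hξ₀ hα hdist (P.involutive a ha b hb), W.curv_F hξ₀ _ _ hc] at h
  simp only [W.conn.zero_right, sub_zero, neg_zero, add_zero] at h
  have h2 := congrArg P.q h
  rwa [map_add, map_add, W.q_F, q_V (W.curv_V _ _ ha), q_V (W.curv_V _ _ hb), map_zero,
    add_zero, add_zero] at h2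

/-- The `Q`-component of the Bianchi identity for `ξ₀`, `η`, `F η'`; its right hand side is
skew in `η`, `η'`. -/
theorem levi_curv (hξ₀ : P.IsScale ξ₀)
    (hα : ∀ ψ : P.X, ψ - α ψ • ξ₀ - W.ι (P.q ψ) ∈ P.V)
    (hdist : ∀ ψ ∈ P.H, ∀ φ : P.X, P.dform α ψ φ = 0)
    {a c : P.X} (ha : a ∈ P.V) (hc : c ∈ P.V) :
    P.levi ξ₀ (W.conn.curv ξ₀ a c) = P.q (W.conn.torsion (W.F c) (W.F a)) := by
  have hS : W.conn.torsion ξ₀ (W.F c) ∈ P.V := W.tors_scale_ι hξ₀ hα hdist _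
  have hS' : W.conn.torsion ξ₀ (W.F (W.conn.cov a c)) ∈ P.V := W.tors_scale_ι hξ₀ hα hdist _
  have hl : P.lie (W.F c) ξ₀ = W.conn.torsion ξ₀ (W.F c) - W.F (W.conn.cov ξ₀ c) := by
    rw [P.lie_skew ξ₀, W.conn.lie_eq, W.parScale, W.cov_F hξ₀ _ hc]; abel
  have h := W.conn.bianchi ξ₀ a (W.F c)
  rw [W.curv_scale, W.tors_V_F hξ₀ hα hdist ha, W.conn.torsion_skew ξ₀ (W.F c),
    W.tors_scale_V hξ₀ ha, W.lie_V_F hξ₀ hα hdist ha hc, hl, W.lie_scale_V hξ₀ ha,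
    W.conn.torsion_sub, W.conn.torsion_sub, W.conn.torsion_add,
    W.tors_V_F hξ₀ hα hdist ha, W.tors_VV_zero hξ₀ hα hdist ha hS,
    W.tors_F_V hξ₀ hα hdist (W.parV _ _ ha), W.tors_scale_V hξ₀ (W.parV _ _ ha),
    W.conn.neg_right, W.conn.neg_right, W.cov_F hξ₀ _ ha, W.curv_F hξ₀ _ _ hc,
    W.conn.zero_right] at h
  have h2 := congrArg P.q h
  simp only [map_add, map_sub, map_neg, map_zero, q_V (W.curv_V _ _ ha),
    q_V (W.parV _ _ hS), q_V hS', W.q_F] at h2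
  simpa using h2

theorem curv_scale_V (hξ₀ : P.IsScale ξ₀)
    (hα : ∀ ψ : P.X, ψ - α ψ • ξ₀ - W.ι (P.q ψ) ∈ P.V)
    (hdist : ∀ ψ ∈ P.H, ∀ φ : P.X, P.dform α ψ φ = 0)
    {a c : P.X} (ha : a ∈ P.V) (hc : c ∈ P.V) : W.conn.curv ξ₀ a c = 0 := by
  apply PathGeometry.levi_inj hξ₀ (W.curv_V _ _ hc)
  apply P.eq_zero_of_add_self
  nth_rewrite 2 [W.curv_symm hξ₀ hα hdist ha hc]
  rw [W.levi_curv hξ₀ hα hdist ha hc, W.levi_curv hξ₀ hα hdist hc ha,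
    W.conn.torsion_skew (W.F c) (W.F a), map_neg, add_neg_cancel]

/-- By tensoriality, `R(·, a)c` vanishes on `H` once it vanishes on `ξ₀` and on `V`. -/
theorem curv_H (hξ₀ : P.IsScale ξ₀) {a c ψ : P.X} (hψ : ψ ∈ P.H) (h0 : W.conn.curv ξ₀ a c = 0)
    (h1 : ∀ η ∈ P.V, W.conn.curv η a c = 0) : W.conn.curv ψ a c = 0 := by
  obtain ⟨f, η, hη, rfl⟩ := PathGeometry.mem_H_iff hξ₀ hψ
  rw [W.conn.curv_add_left, W.conn.curv_smul_left, h0, h1 η hη, smul_zero, add_zero]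

end WeylStructure


/-- Theorem 3.3 (2) of the paper.  Let `(M,E,V)` be a path geometry
(with `V` involutive) and let `(∇,Π)` be a distinguished Weyl structure, i.e. the Weyl
structure associated to a scale `ξ₀` whose dual section `α₀ ∈ Γ(E*)` satisfies
`D(α₀) = 0`.  Here `α ∈ Ω¹(M)` is the one-form with `Π_E = α ξ₀` (so `α = L(α₀)`
extends the dual section `α₀` of `ξ₀` by zero on `V ⊕ ι(Q)`), and the condition
`D(α₀) = 0` says that `dα` vanishes upon insertion of one section of `H`.  Then, in
addition to the general properties of Weyl structures, the torsion component
`τ|_{V×ι(Q)}` and the curvature component `R|_{Λ²H×V}` vanish. -/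
theorem distinguished_torsion_curv_vanish (P : PathGeometry) (ξ₀ : P.X)
    (hξ₀ : P.IsScale ξ₀) (W : WeylStructure P ξ₀)
    (α : P.X →ₗ[P.C] P.C)
    (hα : ∀ ψ : P.X, ψ - α ψ • ξ₀ - W.ι (P.q ψ) ∈ P.V)
    (hdist : ∀ ψ ∈ P.H, ∀ φ : P.X, P.dform α ψ φ = 0) :
    (∀ η ∈ P.V, ∀ w : P.Q, W.conn.torsion η (W.ι w) = 0) ∧
      ∀ ψ₁ ∈ P.H, ∀ ψ₂ ∈ P.H, ∀ η ∈ P.V, W.conn.curv ψ₁ ψ₂ η = 0 := by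
  have hT : ∀ η ∈ P.V, ∀ w : P.Q, W.conn.torsion η (W.ι w) = 0 :=
    fun η hη w => W.tors_V_ι hξ₀ hα hdist hη w
  refine ⟨hT, fun ψ₁ h₁ ψ₂ h₂ η hη => ?_⟩
  have hE : ∀ a ∈ P.V, W.conn.curv ξ₀ a η = 0 :=
    fun a ha => W.curv_scale_V hξ₀ hα hdist ha hη
  refine W.curv_H hξ₀ h₁ ?_ fun a ha => ?_
  · rw [W.conn.curv_skew ψ₂, W.curv_H hξ₀ h₂ (W.conn.curv_self _ _) ?_, neg_zero]
    intro b hb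
    rw [W.conn.curv_skew ξ₀, hE b hb, neg_zero]
  · rw [W.conn.curv_skew ψ₂, W.curv_H hξ₀ h₂ (hE a ha) ?_, neg_zero]
    exact fun b hb => W.curv_VVV hξ₀ hα hdist hb ha hη
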